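/- Let C > 0 and δ > 0 be constants and suppose Builder follows any deterministic online strategy. Then for every η > 0, with high probability at least one of the following holds: (i) |Y_i| > δn for some i ≤ ⌊Cn⌋; or (ii) Builder has purchased at least (3/4 − 6δC − δ − 2e^{−C} − η)·n edges among e_1, …, e_{⌊Cn⌋}. -/

import Mathlib

open Finset Filter

namespace RGP

/-- Number of edges of the complete graph on `n` vertices. -/
def numEdges (n : ℕ) : ℕ := n * (n - 1) / 2

/-- An edge of the complete graph on `Fin n` (an unordered pair of distinct vertices). -/
abbrev EdgeType (n : ℕ) := {e : Sym2 (Fin n) // ¬ e.IsDiag}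

/-- A uniformly random permutation of the edges of `K_n` is modelled by a bijection
`σ` between positions `Fin (numEdges n)` and edges; `σ i` is the edge `e_{i+1}`. -/
abbrev Ord (n : ℕ) := Fin (numEdges n) ≃ EdgeType n

/-- Degree of a vertex `v` in a set `S` of edges. -/
def deg {n : ℕ} (S : Finset (Sym2 (Fin n))) (v : Fin n) : ℕ :=
  (S.filter (fun e => v ∈ e)).card

/-- The edge set `{e_1, …, e_m}` of `G_{n,m}` in the random graph process `σ`. -/
def procEdges {n : ℕ} (σ : Ord n) (m : ℕ) : Finset (Sym2 (Fin n)) :=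
  (Finset.univ.filter (fun i : Fin (numEdges n) => (i : ℕ) < m)).image (fun i => (σ i).1)

/-- The hitting time `τ_k` for minimum degree at least `k`. -/
noncomputable def tau {n : ℕ} (k : ℕ) (σ : Ord n) : ℕ :=
  sInf {m | ∀ v : Fin n, k ≤ deg (procEdges σ m) v}

open scoped Classical in
/-- The probability of an event under the uniformly random edge ordering. -/
noncomputable def Pr {n : ℕ} (p : Ord n → Prop) : ℝ :=
  ((Finset.univ : Finset (Ord n)).filter p).card / (Fintype.card (Ord n) : ℝ)

/-- A deterministic online strategy: given the sequence of edges revealed so far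
(the last entry being the edge just revealed), decide whether to purchase it. -/
abbrev Strategy (n : ℕ) := List (Sym2 (Fin n)) → Bool

/-- The list of the first `i` revealed edges `e_1, …, e_i`. -/
def prefixList {n : ℕ} (σ : Ord n) (i : ℕ) : List (Sym2 (Fin n)) :=
  (List.range i).filterMap (fun j => if h : j < numEdges n then some (σ ⟨j, h⟩).1 else none)

/-- `buy st σ i` is the edge set of Builder's graph `B_i`: the edges purchased by the
strategy `st` among `e_1, …, e_i`. -/
def buy {n : ℕ} (st : Strategy n) (σ : Ord n) : ℕ → Finset (Sym2 (Fin n))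
  | 0 => ∅
  | i + 1 =>
    if h : i < numEdges n then
      if st (prefixList σ (i + 1)) then insert (σ ⟨i, h⟩).1 (buy st σ i)
      else buy st σ i
    else buy st σ i

end RGP

namespace RGP

/-!
A purchased edge covers at most two vertices of Builder's graph, and it covers two only if it joins
two isolated vertices of the graph process or meets `Y_i`. Hence, at time `m = ⌊Cn⌋`, the number of
purchases is at least `n` minus the vertices still uncovered, minus the cost of all such favourable
edges. As long as `|Y_i| ≤ δn`, an edge has about `2δ` endpoints in `Y_i` on average, for a total of
about `2δCn`. If `X` vertices are isolated, the next edge joins two of them with probability about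
`X² / n²`, while `X` decreases by about `2X / n`, so that `X² / (4n)` decreases by about `X² / n²`:
at most about `n/4` edges join two isolated vertices, whatever Builder does. Finally, at most about
`e^{-2C} n + δn` vertices remain uncovered.

One potential with bounded increments, a supermartingale of the random ordering, combines these
estimates, and an exponential moment bound shows that, for each `ε > 0`, with high probability it
exceeds its initial value `(1/4 + e^{-2m/n}) n` by less than `εn`.
-/

section Probability

variable {n : ℕ}

instance : Nonempty (Ord n) := by
  rw [← Fintype.card_eq, Sym2.card_subtype_not_diag, Fintype.card_fin, Fintype.card_fin,
    Nat.choose_two_right, numEdges]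

lemma Pr_mono {p q : Ord n → Prop} (h : ∀ σ, p σ → q σ) : Pr p ≤ Pr q := by
  unfold Pr
  gcongr with σ
  exact h σ

lemma Pr_not (p : Ord n → Prop) : Pr (fun σ => ¬ p σ) = 1 - Pr p := by
  have hcard : (Fintype.card (Ord n) : ℝ) ≠ 0 := by exact_mod_cast Fintype.card_ne_zero
  rw [Pr, Pr, eq_sub_iff_add_eq, ← add_div, div_eq_one_iff_eq hcard, add_comm, ← Nat.cast_add,
    card_filter_add_card_filter_not, card_univ]

lemma Pr_le_one (p : Ord n → Prop) : Pr p ≤ 1 :=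
  div_le_one_of_le₀ (by exact_mod_cast card_le_univ _) (Nat.cast_nonneg _)

lemma tendsto_Pr_one_mono {p q : (n : ℕ) → Ord n → Prop} (h : ∀ n σ, p n σ → q n σ)
    (hp : Tendsto (fun n => Pr (p n)) atTop (nhds 1)) :
    Tendsto (fun n => Pr (q n)) atTop (nhds 1) :=
  tendsto_of_tendsto_of_tendsto_of_le_of_le hp tendsto_const_nhds
    (fun n => Pr_mono (h n)) (fun n => Pr_le_one (q n))

end Probability

section RandomOrdering

variable {N : ℕ} {α β : Type*}

/-- A process on orderings of `α` is adapted if its value at time `i` depends only on the first `i`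
entries of the ordering. -/
def IsAdapted (X : (Fin N ≃ α) → ℕ → β) : Prop :=
  ∀ ⦃i : ℕ⦄ ⦃σ τ : Fin N ≃ α⦄, (∀ k : Fin N, (k : ℕ) < i → σ k = τ k) → X σ i = X τ i

lemma IsAdapted.swap_trans {X : (Fin N ≃ α) → ℕ → β} (hX : IsAdapted X) {i k : Fin N}
    (hik : i ≤ k) (σ : Fin N ≃ α) : X ((Equiv.swap i k).trans σ) i = X σ i :=
  hX fun j hj => by
    have hji : j < i := hj
    rw [Equiv.trans_apply, Equiv.swap_apply_of_ne_of_ne hji.ne (hji.trans_le hik).ne]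

lemma sum_swap_trans [Fintype (Fin N ≃ α)] (i k : Fin N) (F : (Fin N ≃ α) → ℝ) :
    ∑ σ, F ((Equiv.swap i k).trans σ) = ∑ σ, F σ :=
  Equiv.sum_comp ((Equiv.swap i k).equivCongr (Equiv.refl α)) F

/-- A supermartingale up to time `m` for a uniformly random ordering. Given the first `a` entries,
the next one is uniform among the remaining ones; this conditional law is realised by exchanging
position `a` with a position `k ≥ a`, so that no conditional expectation is needed. -/
structure IsSupermartingale (m : ℕ) (M : (Fin N ≃ α) → ℕ → ℝ) : Prop where
  adapted : IsAdapted M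
  sum_swap_le (a : Fin N) (ha : (a : ℕ) < m) (σ : Fin N ≃ α) :
    ∑ k ∈ Ici a, (M ((Equiv.swap a k).trans σ) (a + 1) - M σ a) ≤ 0

lemma sum_exp_mul_le {ι : Type*} {R : Finset ι} {D : ι → ℝ} {K l : ℝ} (hl : 0 ≤ l)
    (hlK : l * K ≤ 1) (hD : ∀ k ∈ R, |D k| ≤ K) (hsum : ∑ k ∈ R, D k ≤ 0) :
    ∑ k ∈ R, Real.exp (l * D k) ≤ #R * Real.exp ((l * K) ^ 2) := by
  have hexp : ∀ k ∈ R, Real.exp (l * D k) ≤ l * D k + Real.exp ((l * K) ^ 2) := fun k hk => by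
    have habs : |l * D k| ≤ l * K := by
      rw [abs_mul, abs_of_nonneg hl]
      exact mul_le_mul_of_nonneg_left (hD k hk) hl
    have htaylor := (abs_le.1 (Real.abs_exp_sub_one_sub_id_le (habs.trans hlK))).2
    have hsq : (l * D k) ^ 2 ≤ (l * K) ^ 2 := sq_le_sq.2 (habs.trans (le_abs_self _))
    linarith [Real.add_one_le_exp ((l * K) ^ 2)]
  calc ∑ k ∈ R, Real.exp (l * D k)
      ≤ ∑ k ∈ R, (l * D k + Real.exp ((l * K) ^ 2)) := sum_le_sum hexp
    _ = l * ∑ k ∈ R, D k + #R * Real.exp ((l * K) ^ 2) := by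
        rw [sum_add_distrib, mul_sum, sum_const, nsmul_eq_mul]
    _ ≤ #R * Real.exp ((l * K) ^ 2) := by
        linarith [mul_nonpos_of_nonneg_of_nonpos hl hsum]

namespace IsSupermartingale

lemma sum_exp_succ_le [Fintype (Fin N ≃ α)] {m : ℕ} {M : (Fin N ≃ α) → ℕ → ℝ}
    (hM : IsSupermartingale m M) {K l : ℝ} (hl : 0 ≤ l) (hlK : l * K ≤ 1) {a : Fin N}
    (ha : (a : ℕ) < m) (hK : ∀ σ, |M σ (a + 1) - M σ a| ≤ K) :
    ∑ σ, Real.exp (l * M σ (a + 1)) ≤ Real.exp ((l * K) ^ 2) * ∑ σ, Real.exp (l * M σ a) := by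
  have hcond (σ : Fin N ≃ α) :
      ∑ k ∈ Ici a, Real.exp (l * M ((Equiv.swap a k).trans σ) (a + 1)) ≤
        #(Ici a) * (Real.exp ((l * K) ^ 2) * Real.exp (l * M σ a)) := by
    have hstep := sum_exp_mul_le (R := Ici a) hl hlK (fun k hk => by
      rw [← hM.adapted.swap_trans (mem_Ici.1 hk) σ]
      exact hK ((Equiv.swap a k).trans σ)) (hM.sum_swap_le a ha σ)
    calc ∑ k ∈ Ici a, Real.exp (l * M ((Equiv.swap a k).trans σ) (a + 1))
        = Real.exp (l * M σ a) * ∑ k ∈ Ici a,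
            Real.exp (l * (M ((Equiv.swap a k).trans σ) (a + 1) - M σ a)) := by
          rw [mul_sum]
          exact sum_congr rfl fun k _ => by rw [← Real.exp_add]; ring_nf
      _ ≤ Real.exp (l * M σ a) * (#(Ici a) * Real.exp ((l * K) ^ 2)) := by gcongr
      _ = #(Ici a) * (Real.exp ((l * K) ^ 2) * Real.exp (l * M σ a)) := by ring
  have hpos : (0 : ℝ) < #(Ici a) := by exact_mod_cast card_pos.2 nonempty_Ici
  refine le_of_mul_le_mul_left ?_ hpos
  calc #(Ici a) * ∑ σ, Real.exp (l * M σ (a + 1))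
      = ∑ k ∈ Ici a, ∑ σ, Real.exp (l * M ((Equiv.swap a k).trans σ) (a + 1)) := by
        rw [sum_congr rfl fun k _ => sum_swap_trans a k fun σ => Real.exp (l * M σ (a + 1)),
          sum_const, nsmul_eq_mul]
    _ = ∑ σ, ∑ k ∈ Ici a, Real.exp (l * M ((Equiv.swap a k).trans σ) (a + 1)) := sum_comm
    _ ≤ ∑ σ, #(Ici a) * (Real.exp ((l * K) ^ 2) * Real.exp (l * M σ a)) :=
        sum_le_sum fun σ _ => hcond σ
    _ = #(Ici a) * (Real.exp ((l * K) ^ 2) * ∑ σ, Real.exp (l * M σ a)) := by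
        simp_rw [← mul_sum]

lemma sum_exp_le [Fintype (Fin N ≃ α)] {m : ℕ} (hm : m ≤ N) {M : (Fin N ≃ α) → ℕ → ℝ}
    (hM : IsSupermartingale m M) {K l : ℝ} (hl : 0 ≤ l) (hlK : l * K ≤ 1)
    (hK : ∀ a : Fin N, (a : ℕ) < m → ∀ σ, |M σ (a + 1) - M σ a| ≤ K) {i : ℕ} (hi : i ≤ m) :
    ∑ σ, Real.exp (l * M σ i) ≤ Real.exp (i * (l * K) ^ 2) * ∑ σ, Real.exp (l * M σ 0) := by
  induction i with
  | zero => simp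
  | succ i ih =>
    let a : Fin N := ⟨i, hi.trans hm⟩
    calc ∑ σ, Real.exp (l * M σ (i + 1))
        ≤ Real.exp ((l * K) ^ 2) * ∑ σ, Real.exp (l * M σ i) :=
          hM.sum_exp_succ_le hl hlK (a := a) hi (hK a hi)
      _ ≤ Real.exp ((l * K) ^ 2) *
            (Real.exp (i * (l * K) ^ 2) * ∑ σ, Real.exp (l * M σ 0)) := by
          gcongr
          exact ih (Nat.le_of_succ_le hi)
      _ = Real.exp ((i + 1 : ℕ) * (l * K) ^ 2) * ∑ σ, Real.exp (l * M σ 0) := by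
          rw [← mul_assoc, ← Real.exp_add]
          push_cast
          ring_nf

lemma Pr_add_le_le_exp {n m : ℕ} (hm : m ≤ numEdges n) {M : Ord n → ℕ → ℝ}
    (hM : IsSupermartingale m M) {K l : ℝ} (hl : 0 ≤ l) (hlK : l * K ≤ 1)
    (hK : ∀ a : Fin (numEdges n), (a : ℕ) < m → ∀ σ, |M σ (a + 1) - M σ a| ≤ K)
    {c : ℝ} (hc : ∀ σ, M σ 0 = c) (t : ℝ) :
    Pr (fun σ => c + t ≤ M σ m) ≤ Real.exp (m * (l * K) ^ 2 - l * t) := by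
  classical
  have hpos : (0 : ℝ) < Fintype.card (Ord n) := by exact_mod_cast Fintype.card_pos
  have hmarkov : #{σ | c + t ≤ M σ m} * Real.exp (l * (c + t)) ≤
      Real.exp (m * (l * K) ^ 2) * (Fintype.card (Ord n) * Real.exp (l * c)) :=
    calc #{σ | c + t ≤ M σ m} * Real.exp (l * (c + t))
        = ∑ σ with c + t ≤ M σ m, Real.exp (l * (c + t)) := by rw [sum_const, nsmul_eq_mul]
      _ ≤ ∑ σ with c + t ≤ M σ m, Real.exp (l * M σ m) := sum_le_sum fun σ hσ => by
          gcongr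
          exact (mem_filter.1 hσ).2
      _ ≤ ∑ σ, Real.exp (l * M σ m) :=
          sum_le_univ_sum_of_nonneg fun σ => (Real.exp_pos _).le
      _ ≤ Real.exp (m * (l * K) ^ 2) * ∑ σ, Real.exp (l * M σ 0) :=
          hM.sum_exp_le hm hl hlK hK le_rfl
      _ = Real.exp (m * (l * K) ^ 2) * (Fintype.card (Ord n) * Real.exp (l * c)) := by
          simp only [hc, sum_const, card_univ, nsmul_eq_mul]
  have hexp : Real.exp (m * (l * K) ^ 2 - l * t) * Real.exp (l * (c + t)) =
      Real.exp (m * (l * K) ^ 2) * Real.exp (l * c) := by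
    rw [← Real.exp_add, ← Real.exp_add]
    ring_nf
  rw [Pr, div_le_iff₀ hpos]
  refine le_of_mul_le_mul_right ?_ (Real.exp_pos (l * (c + t)))
  calc _ ≤ Real.exp (m * (l * K) ^ 2) * (Fintype.card (Ord n) * Real.exp (l * c)) := by
        convert hmarkov
    _ = Real.exp (m * (l * K) ^ 2 - l * t) * Fintype.card (Ord n) * Real.exp (l * (c + t)) := by
        rw [mul_right_comm, hexp]
        ring

end IsSupermartingale

end RandomOrdering

section Edges

variable {n : ℕ}

lemma two_mul_numEdges (n : ℕ) : (2 : ℝ) * numEdges n = n * (n - 1) := by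
  rw [numEdges, ← Nat.choose_two_right, Nat.cast_choose_two, mul_div_cancel₀ _ two_ne_zero]

/-- The isolated vertices of the graph with edge set `S`. -/
def isolated (S : Finset (Sym2 (Fin n))) : Finset (Fin n) := {v | deg S v = 0}

/-- The number of endpoints of `e` in `I`. If `I` is the set of isolated vertices, this is the
number of vertices that `e` newly covers. -/
def endpointCount (I : Finset (Fin n)) (e : Sym2 (Fin n)) : ℕ := #{v ∈ I | v ∈ e}

lemma mem_isolated {S : Finset (Sym2 (Fin n))} {v : Fin n} :
    v ∈ isolated S ↔ ∀ e ∈ S, v ∉ e := by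
  simp [isolated, deg, filter_eq_empty_iff]

lemma isolated_empty : isolated (∅ : Finset (Sym2 (Fin n))) = univ := by
  ext v
  simp [mem_isolated]

lemma card_isolated_insert_add (S : Finset (Sym2 (Fin n))) (e : Sym2 (Fin n)) :
    #(isolated (insert e S)) + endpointCount (isolated S) e = #(isolated S) := by
  have hfilter : isolated (insert e S) = {v ∈ isolated S | v ∉ e} := by
    ext v
    simp only [mem_isolated, mem_filter, forall_mem_insert, and_comm]
  rw [hfilter, add_comm, endpointCount, card_filter_add_card_filter_not]

lemma card_isolated_le (S : Finset (Sym2 (Fin n))) : #(isolated S) ≤ n :=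
  card_finset_fin_le _

lemma endpointCount_le_card (I : Finset (Fin n)) (e : Sym2 (Fin n)) : endpointCount I e ≤ #I :=
  card_filter_le _ _

lemma endpointCount_le_two (I : Finset (Fin n)) (e : Sym2 (Fin n)) : endpointCount I e ≤ 2 := by
  induction e with
  | _ a b =>
    refine (card_le_card (t := {a, b}) fun v hv => ?_).trans card_le_two
    simpa using (mem_filter.1 hv).2

lemma endpointCount_le_one_add (I : Finset (Fin n)) (e : Sym2 (Fin n)) :
    endpointCount I e ≤ (if e ∈ I.sym2 then 1 else 0) + 1 := by
  split_ifs with he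
  · exact endpointCount_le_two I e
  · obtain ⟨v, hve, hvI⟩ : ∃ v ∈ e, v ∉ I := by simpa [mem_sym2_iff] using he
    obtain ⟨w, rfl⟩ := hve
    refine (card_le_card (t := {w}) fun x hx => ?_).trans (card_singleton w).le
    obtain ⟨hxI, hxe⟩ := mem_filter.1 hx
    exact mem_singleton.2 ((Sym2.mem_iff.1 hxe).resolve_left fun hxv => hvI (hxv ▸ hxI))

lemma endpointCount_le_add {I J K : Finset (Fin n)} (h : I ⊆ J ∪ K) (e : Sym2 (Fin n)) :
    endpointCount I e ≤ endpointCount J e + endpointCount K e := by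
  refine (card_le_card (filter_subset_filter _ h)).trans ?_
  rw [filter_union]
  exact card_union_le _ _

lemma card_edges_mem (v : Fin n) : #{e : EdgeType n | v ∈ e.1} = n - 1 := by
  have hmap : ({e : EdgeType n | v ∈ e.1} : Finset (EdgeType n)).map (.subtype _) =
      (⊤ : SimpleGraph (Fin n)).incidenceFinset v := by
    ext e
    simp [SimpleGraph.mem_incidenceFinset, SimpleGraph.incidenceSet, and_comm]
  rw [← card_map, hmap, SimpleGraph.card_incidenceFinset_eq_degree,
    SimpleGraph.complete_graph_degree, Fintype.card_fin]

lemma card_edges_mem_sym2 (I : Finset (Fin n)) :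
    #{e : EdgeType n | e.1 ∈ I.sym2} = (#I).choose 2 := by
  have hmap : ({e : EdgeType n | e.1 ∈ I.sym2} : Finset (EdgeType n)).map (.subtype _) =
      {e ∈ I.sym2 | ¬ e.IsDiag} := by
    ext e
    simp [and_comm]
  rw [← card_map, hmap, sym2_eq_image, Sym2.filter_image_mk_not_isDiag, Sym2.card_image_offDiag]

lemma sum_endpointCount (I : Finset (Fin n)) :
    ∑ e : EdgeType n, endpointCount I e.1 = #I * (n - 1) := by
  simp_rw [endpointCount, card_filter _ I]
  rw [sum_comm, sum_const_nat fun v _ => ?_]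
  rw [← card_filter, card_edges_mem]

/-- A bound for the number of vertices beyond the first that a purchase of `e` can cover, when `I`
is the set of isolated vertices of the graph process and `Y` the set of vertices covered by the
graph process but not by Builder. -/
def stepCost (I Y : Finset (Fin n)) (e : Sym2 (Fin n)) : ℕ :=
  (if e ∈ I.sym2 then 1 else 0) + endpointCount Y e

lemma stepCost_le_three (I Y : Finset (Fin n)) (e : Sym2 (Fin n)) : stepCost I Y e ≤ 3 := by
  have := endpointCount_le_two Y e
  unfold stepCost
  split_ifs <;> omega

lemma sum_stepCost (I Y : Finset (Fin n)) :
    ∑ e : EdgeType n, stepCost I Y e.1 = (#I).choose 2 + #Y * (n - 1) := by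
  simp_rw [stepCost]
  rw [sum_add_distrib, ← card_filter, card_edges_mem_sym2, sum_endpointCount]

end Edges

section BuilderGraph

variable {n : ℕ}

lemma procEdges_zero (σ : Ord n) : procEdges σ 0 = ∅ := by
  simp [procEdges]

lemma procEdges_succ (σ : Ord n) (a : Fin (numEdges n)) :
    procEdges σ (a + 1) = insert (σ a).1 (procEdges σ a) := by
  have hpositions : ({k | (k : ℕ) < a + 1} : Finset (Fin (numEdges n))) =
      insert a ({k | (k : ℕ) < a} : Finset (Fin (numEdges n))) := by
    ext k
    simp only [mem_filter, mem_univ, true_and, mem_insert, Fin.ext_iff]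
    omega
  rw [procEdges, hpositions, image_insert, procEdges]

lemma mem_procEdges_iff {σ : Ord n} {k : Fin (numEdges n)} {i : ℕ} :
    (σ k).1 ∈ procEdges σ i ↔ (k : ℕ) < i := by
  simp [procEdges, Subtype.ext_iff.symm]

lemma buy_succ (st : Strategy n) (σ : Ord n) (a : Fin (numEdges n)) :
    buy st σ (a + 1) = if st (prefixList σ (a + 1)) then insert (σ a).1 (buy st σ a)
      else buy st σ a := by
  simp [buy]

lemma buy_subset_procEdges (st : Strategy n) (σ : Ord n) {i : ℕ} (hi : i ≤ numEdges n) :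
    buy st σ i ⊆ procEdges σ i := by
  induction i with
  | zero => simp [buy]
  | succ i ih =>
    let a : Fin (numEdges n) := ⟨i, hi⟩
    have hsub := ih (Nat.le_of_succ_le hi)
    rw [buy_succ st σ a, procEdges_succ σ a]
    split_ifs
    · exact insert_subset_insert _ hsub
    · exact hsub.trans (subset_insert _ _)

/-- The set `Y_i` of vertices covered by the graph process but not by Builder's graph. -/
def missed (st : Strategy n) (σ : Ord n) (i : ℕ) : Finset (Fin n) :=
  {v | deg (buy st σ i) v = 0 ∧ 1 ≤ deg (procEdges σ i) v}

lemma isolated_buy_subset (st : Strategy n) (σ : Ord n) (i : ℕ) :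
    isolated (buy st σ i) ⊆ isolated (procEdges σ i) ∪ missed st σ i := fun v hv => by
  simp only [isolated, missed, mem_union, mem_filter, mem_univ, true_and] at hv ⊢
  omega

lemma isAdapted_procEdges : IsAdapted (procEdges (n := n)) := fun i σ τ h =>
  image_congr fun k hk => by
    rw [h k (by simpa using hk)]

lemma isAdapted_prefixList : IsAdapted (prefixList (n := n)) := fun i σ τ h =>
  List.filterMap_congr fun j hj => by
    split_ifs with hjN
    · rw [h ⟨j, hjN⟩ (List.mem_range.1 hj)]
    · rfl

lemma isAdapted_buy (st : Strategy n) : IsAdapted (buy st) := by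
  intro i σ τ h
  induction i with
  | zero => rfl
  | succ i ih =>
    rw [buy, buy, isAdapted_prefixList h, ih fun k hk => h k (hk.trans i.lt_succ_self)]
    split_ifs with hiN
    · rw [h ⟨i, hiN⟩ i.lt_succ_self]
    all_goals rfl

lemma isAdapted_missed (st : Strategy n) : IsAdapted (missed st) := fun i σ τ h => by
  rw [missed, missed, isAdapted_buy st h, isAdapted_procEdges h]

lemma sum_Ici_endpointCount_isolated (σ : Ord n) (a : Fin (numEdges n)) :
    ∑ k ∈ Ici a, endpointCount (isolated (procEdges σ a)) (σ k).1 =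
      #(isolated (procEdges σ a)) * (n - 1) := by
  rw [← sum_endpointCount, ← Equiv.sum_comp σ]
  refine sum_subset (subset_univ _) fun k _ hk => card_eq_zero.2 (filter_eq_empty_iff.2 ?_)
  intro v hv
  have hka : (k : ℕ) < a := by simpa using hk
  exact mem_isolated.1 hv _ (mem_procEdges_iff.2 hka)

open scoped Classical in
/-- The set `Y_i`, replaced by the empty set when it has more than `δn` elements: it bounds the cost
on every ordering, without conditioning on all the `Y_i` being small. -/
noncomputable def cappedMissed (st : Strategy n) (δ : ℝ) (σ : Ord n) (i : ℕ) : Finset (Fin n) :=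
  if (#(missed st σ i) : ℝ) ≤ δ * n then missed st σ i else ∅

lemma card_cappedMissed_le (st : Strategy n) {δ : ℝ} (hδ : 0 ≤ δ) (σ : Ord n) (i : ℕ) :
    (#(cappedMissed st δ σ i) : ℝ) ≤ δ * n := by
  unfold cappedMissed
  split_ifs with h
  · exact h
  · simp only [card_empty, Nat.cast_zero]
    positivity

lemma isAdapted_cappedMissed (st : Strategy n) (δ : ℝ) : IsAdapted (cappedMissed st δ) :=
  fun i σ τ h => by
    rw [cappedMissed, cappedMissed, isAdapted_missed st h]

/-- The sum of the step costs of the first `i` edges, purchased or not, so that Builder's decisions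
affect it only through the sets `Y_j`. -/
noncomputable def totalCost (st : Strategy n) (δ : ℝ) (σ : Ord n) (i : ℕ) : ℕ :=
  ∑ j ∈ range i, if h : j < numEdges n then
    stepCost (isolated (procEdges σ j)) (cappedMissed st δ σ j) (σ ⟨j, h⟩).1 else 0

lemma totalCost_succ (st : Strategy n) (δ : ℝ) (σ : Ord n) (a : Fin (numEdges n)) :
    totalCost st δ σ (a + 1) = totalCost st δ σ a +
      stepCost (isolated (procEdges σ a)) (cappedMissed st δ σ a) (σ a).1 := by
  simp [totalCost, sum_range_succ]

lemma isAdapted_totalCost (st : Strategy n) (δ : ℝ) : IsAdapted (totalCost st δ) :=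
  fun i σ τ h => sum_congr rfl fun j hj => by
    have hji := mem_range.1 hj
    have hj' : ∀ k : Fin (numEdges n), (k : ℕ) < j → σ k = τ k := fun k hk => h k (hk.trans hji)
    rw [isAdapted_procEdges hj', isAdapted_cappedMissed st δ hj']
    split_ifs with hjN
    · rw [h ⟨j, hjN⟩ hji]
    · rfl

lemma card_isolated_buy_le_succ (st : Strategy n) {δ : ℝ} {σ : Ord n} {a : Fin (numEdges n)}
    (hY : (#(missed st σ a) : ℝ) ≤ δ * n) :
    #(isolated (buy st σ a)) + #(buy st σ a) + totalCost st δ σ a ≤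
      #(isolated (buy st σ (a + 1))) + #(buy st σ (a + 1)) + totalCost st δ σ (a + 1) := by
  have hcover : endpointCount (isolated (buy st σ a)) (σ a).1 ≤
      stepCost (isolated (procEdges σ a)) (missed st σ a) (σ a).1 + 1 := by
    have hsplit := endpointCount_le_add (isolated_buy_subset st σ a) (σ a).1
    have hinside := endpointCount_le_one_add (isolated (procEdges σ a)) (σ a).1
    rw [stepCost]
    omega
  have hdrop := card_isolated_insert_add (buy st σ a) (σ a).1
  have hnew : (σ a).1 ∉ buy st σ a := fun h =>
    (mem_procEdges_iff.1 (buy_subset_procEdges st σ a.2.le h)).false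
  rw [totalCost_succ, buy_succ, cappedMissed, if_pos hY]
  split_ifs
  · rw [card_insert_of_notMem hnew]
    omega
  · omega

lemma le_card_isolated_buy_add (st : Strategy n) {δ : ℝ} {σ : Ord n} {m : ℕ}
    (hm : m ≤ numEdges n) (hY : ∀ i < m, (#(missed st σ i) : ℝ) ≤ δ * n) :
    n ≤ #(isolated (buy st σ m)) + #(buy st σ m) + totalCost st δ σ m := by
  induction m with
  | zero => simp [buy, isolated_empty]
  | succ m ih =>
    let a : Fin (numEdges n) := ⟨m, hm⟩
    exact (ih (Nat.le_of_succ_le hm) fun i hi => hY i (hi.trans m.lt_succ_self)).trans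
      (card_isolated_buy_le_succ st (a := a) (hY m m.lt_succ_self))

end BuilderGraph

section Potential

variable {n : ℕ}

/-- The weight `e^{-2(m - i)/n}` of the isolated vertices in the potential. On average each revealed
edge multiplies their number by at most `1 - 2/n ≤ e^{-2/n}`, which offsets the growth of the
weight. -/
noncomputable def discount (n m i : ℕ) : ℝ := Real.exp (2 * ((i : ℝ) - m) / n)

lemma discount_pos (n m i : ℕ) : 0 < discount n m i := Real.exp_pos _

lemma discount_self (n m : ℕ) : discount n m m = 1 := by simp [discount]

lemma discount_zero (n m : ℕ) : discount n m 0 = Real.exp (-2 * (m / n)) := by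
  rw [discount]
  ring_nf

lemma discount_le_one {n m i : ℕ} (hi : i ≤ m) : discount n m i ≤ 1 := by
  have him : (i : ℝ) ≤ m := by exact_mod_cast hi
  exact Real.exp_le_one_iff.2 (div_nonpos_of_nonpos_of_nonneg (by linarith) n.cast_nonneg)

lemma discount_le_succ (n m i : ℕ) : discount n m i ≤ discount n m (i + 1) := by
  unfold discount
  gcongr
  exact_mod_cast i.le_succ

lemma discount_succ_sub_le (n m i : ℕ) :
    discount n m (i + 1) - discount n m i ≤ discount n m (i + 1) * (2 / n) := by
  have hfactor : discount n m i = discount n m (i + 1) * Real.exp (-(2 / n)) := by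
    rw [discount, discount, ← Real.exp_add]
    push_cast
    ring_nf
  have hexp := mul_le_mul_of_nonneg_left (Real.add_one_le_exp (-(2 / n : ℝ)))
    (discount_pos n m (i + 1)).le
  rw [hfactor]
  linarith

lemma numEdges_mul_discount_succ_sub_le (hn : 0 < n) (m i : ℕ) :
    numEdges n * (discount n m (i + 1) - discount n m i) ≤ discount n m (i + 1) * (n - 1) := by
  calc numEdges n * (discount n m (i + 1) - discount n m i)
      ≤ numEdges n * (discount n m (i + 1) * (2 / n)) := by
        gcongr
        exact discount_succ_sub_le n m i
    _ = 2 * numEdges n * discount n m (i + 1) / n := by ring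
    _ = discount n m (i + 1) * (n - 1) := by
        rw [two_mul_numEdges]
        field_simp

lemma abs_discount_mul_sub_mul_le (hn : 0 < n) {m i : ℕ} (hi : i < m) {x d : ℝ} (hx : 0 ≤ x)
    (hxn : x ≤ n) (hd : 0 ≤ d) (hd2 : d ≤ 2) :
    |(discount n m (i + 1) - discount n m i) * x - discount n m (i + 1) * d| ≤ 2 := by
  have hw := discount_le_one (n := n) (Nat.succ_le_of_lt hi)
  have hgrowth : (discount n m (i + 1) - discount n m i) * x ≤ 2 :=
    calc (discount n m (i + 1) - discount n m i) * x ≤ 1 * (2 / n) * n := by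
          gcongr
          exact (discount_succ_sub_le n m i).trans (by gcongr)
      _ = 2 := by field_simp
  have hdecay : discount n m (i + 1) * d ≤ 2 :=
    calc discount n m (i + 1) * d ≤ 1 * 2 := by gcongr
      _ = 2 := one_mul 2
  have hdecay0 : 0 ≤ discount n m (i + 1) * d := mul_nonneg (discount_pos n m (i + 1)).le hd
  exact abs_sub_le_of_nonneg_of_le (mul_nonneg (sub_nonneg.2 (discount_le_succ n m i)) hx)
    hgrowth hdecay0 hdecay

/-- The potential whose increments have nonpositive conditional mean up to time `m`. With `X` the
number of isolated vertices of the graph process, the decrease of `X² / (4n)` pays for edges inside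
the isolated set, up to `d² / (4n) ≤ 1/n` for an edge covering `d` isolated vertices; the term `3δ`
pays for endpoints in `Y_i`, met with mean at most `2δN / (N - i) ≤ 3δ` as long as `3i ≤ N`. -/
noncomputable def potential (st : Strategy n) (δ : ℝ) (m : ℕ) (σ : Ord n) (i : ℕ) : ℝ :=
  totalCost st δ σ i + (#(isolated (procEdges σ i)) : ℝ) ^ 2 / (4 * n) +
    discount n m i * #(isolated (procEdges σ i)) - i * (1 / n + 3 * δ)

lemma isAdapted_potential (st : Strategy n) (δ : ℝ) (m : ℕ) : IsAdapted (potential st δ m) :=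
  fun i σ τ h => by
    rw [potential, potential, isAdapted_totalCost st δ h, isAdapted_procEdges h]

lemma potential_zero (hn : 0 < n) (st : Strategy n) (δ : ℝ) (m : ℕ) (σ : Ord n) :
    potential st δ m σ 0 = (1 / 4 + Real.exp (-2 * (m / n))) * n := by
  simp only [potential, totalCost, range_zero, sum_empty, procEdges_zero, isolated_empty,
    card_univ, Fintype.card_fin, discount_zero, Nat.cast_zero]
  field_simp
  ring

lemma totalCost_add_card_isolated_le_potential (st : Strategy n) (δ : ℝ) (m : ℕ) (σ : Ord n) :
    totalCost st δ σ m + #(isolated (procEdges σ m)) - m * (1 / n + 3 * δ) ≤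
      potential st δ m σ m := by
  have hsq : 0 ≤ (#(isolated (procEdges σ m)) : ℝ) ^ 2 / (4 * n) := by positivity
  rw [potential, discount_self]
  linarith

lemma potential_succ_sub (st : Strategy n) (δ : ℝ) (m : ℕ) (σ : Ord n) (a : Fin (numEdges n)) :
    potential st δ m σ (a + 1) - potential st δ m σ a =
      stepCost (isolated (procEdges σ a)) (cappedMissed st δ σ a) (σ a).1 -
      endpointCount (isolated (procEdges σ a)) (σ a).1 *
        (2 * #(isolated (procEdges σ a)) - endpointCount (isolated (procEdges σ a)) (σ a).1) /
          (4 * n) +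
      ((discount n m (a + 1) - discount n m a) * #(isolated (procEdges σ a)) -
        discount n m (a + 1) * endpointCount (isolated (procEdges σ a)) (σ a).1) -
      (1 / n + 3 * δ) := by
  have hX : (#(isolated (procEdges σ (a + 1))) : ℝ) =
      #(isolated (procEdges σ a)) - endpointCount (isolated (procEdges σ a)) (σ a).1 := by
    rw [procEdges_succ, eq_sub_iff_add_eq]
    exact_mod_cast card_isolated_insert_add _ _
  rw [potential, potential, totalCost_succ, hX]
  push_cast
  ring

lemma abs_potential_succ_sub_le (hn : 0 < n) (st : Strategy n) {δ : ℝ} (hδ : 0 ≤ δ) {m : ℕ}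
    {a : Fin (numEdges n)} (ha : (a : ℕ) < m) (σ : Ord n) :
    |potential st δ m σ (a + 1) - potential st δ m σ a| ≤ 5 + 3 * δ := by
  rw [potential_succ_sub]
  set I := isolated (procEdges σ a)
  set e := (σ a).1
  have hc : (stepCost I (cappedMissed st δ σ a) e : ℝ) ≤ 3 := by
    exact_mod_cast stepCost_le_three _ _ _
  have hd0 : (0 : ℝ) ≤ endpointCount I e := Nat.cast_nonneg _
  have hd : (endpointCount I e : ℝ) ≤ 2 := by exact_mod_cast endpointCount_le_two _ _
  have hdX : (endpointCount I e : ℝ) ≤ #I := by exact_mod_cast endpointCount_le_card _ _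
  have hXn : (#I : ℝ) ≤ n := by exact_mod_cast card_isolated_le _
  have hn1 : (1 : ℝ) ≤ n := by exact_mod_cast hn
  have hinv0 : 0 ≤ 1 / (n : ℝ) := by positivity
  have hinv : 1 / (n : ℝ) ≤ 1 := div_le_self zero_le_one hn1
  have hsquare0 : 0 ≤ endpointCount I e * (2 * #I - endpointCount I e : ℝ) / (4 * n) :=
    div_nonneg (mul_nonneg hd0 (by linarith)) (by positivity)
  have hsquare : endpointCount I e * (2 * #I - endpointCount I e : ℝ) / (4 * n) ≤ 1 := by
    rw [div_le_one (by positivity)]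
    nlinarith
  have hlinear := abs_le.1
    (abs_discount_mul_sub_mul_le hn ha (hd0.trans hdX) hXn hd0 hd)
  rw [abs_le]
  constructor <;> linarith

lemma potential_swap_sub_le (hn : 0 < n) (st : Strategy n) (δ : ℝ) (m : ℕ) (σ : Ord n)
    {a k : Fin (numEdges n)} (hak : a ≤ k) :
    potential st δ m ((Equiv.swap a k).trans σ) (a + 1) - potential st δ m σ a ≤
      stepCost (isolated (procEdges σ a)) (cappedMissed st δ σ a) (σ k).1 -
      (#(isolated (procEdges σ a)) / (2 * n) + discount n m (a + 1)) *
        endpointCount (isolated (procEdges σ a)) (σ k).1 +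
      ((discount n m (a + 1) - discount n m a) * #(isolated (procEdges σ a)) - 3 * δ) := by
  rw [← (isAdapted_potential st δ m).swap_trans hak σ, potential_succ_sub,
    isAdapted_procEdges.swap_trans hak σ, (isAdapted_cappedMissed st δ).swap_trans hak σ,
    Equiv.trans_apply, Equiv.swap_apply_left]
  set I := isolated (procEdges σ a)
  set e := (σ k).1
  have hd : (endpointCount I e : ℝ) ≤ 2 := by exact_mod_cast endpointCount_le_two _ _
  have hsquare : (endpointCount I e : ℝ) ^ 2 / (4 * n) ≤ 1 / n :=
    calc (endpointCount I e : ℝ) ^ 2 / (4 * n) ≤ 2 ^ 2 / (4 * n) := by gcongr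
      _ = (1 / n : ℝ) := by
        field_simp
        norm_num
  have hexpand : endpointCount I e * (2 * #I - endpointCount I e : ℝ) / (4 * n) =
      #I / (2 * n) * endpointCount I e - (endpointCount I e : ℝ) ^ 2 / (4 * n) := by
    field_simp
    ring
  rw [hexpand]
  linarith

lemma sum_stepCost_sub_le (hn : 0 < n) (st : Strategy n) {δ : ℝ} (hδ : 0 ≤ δ) (σ : Ord n)
    (a : Fin (numEdges n)) :
    ∑ k ∈ Ici a, (stepCost (isolated (procEdges σ a)) (cappedMissed st δ σ a) (σ k).1 : ℝ) ≤
      #(isolated (procEdges σ a)) / (2 * n) * (#(isolated (procEdges σ a)) * (n - 1)) +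
        2 * δ * numEdges n := by
  set I := isolated (procEdges σ a)
  set Y := cappedMissed st δ σ a
  have hn1 : (1 : ℝ) ≤ n := by exact_mod_cast hn
  have hX : (#I : ℝ) ≤ n := by exact_mod_cast card_isolated_le _
  have hchoose : (((#I).choose 2 : ℕ) : ℝ) ≤ #I / (2 * n) * (#I * (n - 1)) := by
    rw [Nat.cast_choose_two, div_mul_eq_mul_div, div_le_div_iff₀ two_pos (by positivity)]
    nlinarith [mul_nonneg (Nat.cast_nonneg (α := ℝ) #I) (sub_nonneg.2 hX)]
  have hY : (#Y : ℝ) * (n - 1) ≤ 2 * δ * numEdges n :=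
    calc (#Y : ℝ) * (n - 1) ≤ δ * n * (n - 1) :=
          mul_le_mul_of_nonneg_right (card_cappedMissed_le st hδ σ a) (sub_nonneg.2 hn1)
      _ = 2 * δ * numEdges n := by linear_combination -δ * two_mul_numEdges n
  calc ∑ k ∈ Ici a, (stepCost I Y (σ k).1 : ℝ)
      ≤ ∑ k, (stepCost I Y (σ k).1 : ℝ) :=
        sum_le_univ_sum_of_nonneg fun k => Nat.cast_nonneg _
    _ = ((#I).choose 2 : ℕ) + #Y * (n - 1) := by
        rw [Equiv.sum_comp σ fun e => (stepCost I Y e.1 : ℝ), ← Nat.cast_pred hn]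
        exact_mod_cast sum_stepCost I Y
    _ ≤ #I / (2 * n) * (#I * (n - 1)) + 2 * δ * numEdges n := add_le_add hchoose hY

lemma isSupermartingale_potential (hn : 0 < n) (st : Strategy n) {δ : ℝ} (hδ : 0 ≤ δ) {m : ℕ}
    (hm : 3 * m ≤ numEdges n) : IsSupermartingale m (potential st δ m) where
  adapted := isAdapted_potential st δ m
  sum_swap_le a ha σ := by
    refine (sum_le_sum fun k hk => potential_swap_sub_le hn st δ m σ (mem_Ici.1 hk)).trans ?_
    have hcost := sum_stepCost_sub_le hn st hδ σ a
    have hends : ∑ k ∈ Ici a, (endpointCount (isolated (procEdges σ a)) (σ k).1 : ℝ) =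
        #(isolated (procEdges σ a)) * (n - 1) := by
      rw [← Nat.cast_pred hn]
      exact_mod_cast sum_Ici_endpointCount_isolated σ a
    rw [sum_add_distrib, sum_sub_distrib, ← mul_sum, hends, sum_const, nsmul_eq_mul,
      Fin.card_Ici, Nat.cast_sub a.2.le]
    have hgrowth : (numEdges n - (a : ℕ)) * (discount n m (a + 1) - discount n m a) ≤
        discount n m (a + 1) * (n - 1) := by
      have hincr := sub_nonneg.2 (discount_le_succ n m a)
      exact (mul_le_mul_of_nonneg_right (sub_le_self _ (Nat.cast_nonneg _)) hincr).trans
        (numEdges_mul_discount_succ_sub_le hn m a)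
    have hgrowthX := mul_le_mul_of_nonneg_right hgrowth
      (Nat.cast_nonneg (α := ℝ) #(isolated (procEdges σ a)))
    have hremaining : 2 * (numEdges n : ℝ) ≤ 3 * (numEdges n - (a : ℕ)) := by
      have : 3 * ((a : ℕ) : ℝ) ≤ numEdges n := by exact_mod_cast (by omega : 3 * (a : ℕ) ≤ _)
      linarith
    have hmissed := mul_le_mul_of_nonneg_left hremaining hδ
    linarith

end Potential

section Dichotomy

variable {n : ℕ}

lemma le_card_buy_of_potential_le (hn : 0 < n) (st : Strategy n) {δ t : ℝ} {m : ℕ}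
    (hm : m ≤ numEdges n) {σ : Ord n} (hY : ∀ i ≤ m, (#(missed st σ i) : ℝ) ≤ δ * n)
    (ht : potential st δ m σ m ≤ potential st δ m σ 0 + t) :
    (3 / 4 - δ - Real.exp (-2 * (m / n))) * n - m * (1 / n + 3 * δ) - t ≤ #(buy st σ m) := by
  have hcover : (n : ℝ) ≤ #(isolated (buy st σ m)) + #(buy st σ m) + totalCost st δ σ m := by
    exact_mod_cast le_card_isolated_buy_add st hm fun i hi => hY i hi.le
  have hisolated : (#(isolated (buy st σ m)) : ℝ) ≤
      #(isolated (procEdges σ m)) + #(missed st σ m) := by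
    exact_mod_cast (card_le_card (isolated_buy_subset st σ m)).trans (card_union_le _ _)
  have hfinal := totalCost_add_card_isolated_le_potential st δ m σ
  rw [potential_zero hn] at ht
  linarith [hY m le_rfl]

theorem one_sub_exp_le_Pr_missed_or_le_card_buy (hn : 0 < n) (st : Strategy n) {δ : ℝ}
    (hδ : 0 ≤ δ) {m : ℕ} (hm : 3 * m ≤ numEdges n) {l : ℝ} (hl : 0 ≤ l)
    (hlδ : l * (5 + 3 * δ) ≤ 1) (t : ℝ) :
    1 - Real.exp (m * (l * (5 + 3 * δ)) ^ 2 - l * t) ≤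
      Pr (fun σ : Ord n => (∃ i ≤ m, δ * n < #(missed st σ i)) ∨
        (3 / 4 - δ - Real.exp (-2 * (m / n))) * n - m * (1 / n + 3 * δ) - t ≤ #(buy st σ m)) := by
  have hmN : m ≤ numEdges n := by omega
  have htail := (isSupermartingale_potential hn st hδ hm).Pr_add_le_le_exp hmN hl hlδ
    (fun a ha σ => abs_potential_succ_sub_le hn st hδ ha σ)
    (fun σ => potential_zero hn st δ m σ) t
  refine (sub_le_sub_left htail 1).trans ?_
  rw [← Pr_not]
  refine Pr_mono fun σ hσ => or_iff_not_imp_left.2 fun hY => ?_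
  push Not at hY
  refine le_card_buy_of_potential_le hn st hmN hY ?_
  rw [potential_zero hn]
  exact (not_le.1 hσ).le

lemma tendsto_floor_mul_div {C : ℝ} (hC : 0 ≤ C) :
    Tendsto (fun n : ℕ => (⌊C * (n : ℝ)⌋₊ / n : ℝ)) atTop (nhds C) :=
  (tendsto_nat_floor_mul_div_atTop hC).comp tendsto_natCast_atTop_atTop

lemma eventually_three_mul_floor_le_numEdges {C : ℝ} (hC : 0 ≤ C) :
    ∀ᶠ n : ℕ in atTop, 3 * ⌊C * (n : ℝ)⌋₊ ≤ numEdges n := by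
  filter_upwards [tendsto_natCast_atTop_atTop.eventually_ge_atTop (6 * C + 1)] with n hn
  have hfloor : (⌊C * (n : ℝ)⌋₊ : ℝ) ≤ C * n := Nat.floor_le (by positivity)
  have hedges := two_mul_numEdges n
  have : 3 * (⌊C * (n : ℝ)⌋₊ : ℝ) ≤ numEdges n := by nlinarith
  exact_mod_cast this

lemma eventually_exp_mul_add_floor_mul_le {C δ η : ℝ} (hC : 0 ≤ C) (hη : 0 < η) :
    ∀ᶠ n : ℕ in atTop, Real.exp (-2 * (⌊C * (n : ℝ)⌋₊ / n)) * n +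
      ⌊C * (n : ℝ)⌋₊ * (1 / n + 3 * δ) ≤ (Real.exp (-2 * C) + 3 * δ * C + η) * n := by
  have hratio := tendsto_floor_mul_div hC
  have hlim : Tendsto (fun n : ℕ => Real.exp (-2 * (⌊C * (n : ℝ)⌋₊ / n)) +
      ⌊C * (n : ℝ)⌋₊ / n * (1 / n + 3 * δ)) atTop
      (nhds (Real.exp (-2 * C) + C * (0 + 3 * δ))) :=
    ((Real.continuous_exp.tendsto _).comp (hratio.const_mul (-2))).add
      (hratio.mul (tendsto_one_div_atTop_nhds_zero_nat.add_const _))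
  have hgap : Real.exp (-2 * C) + C * (0 + 3 * δ) < Real.exp (-2 * C) + 3 * δ * C + η := by
    linarith
  filter_upwards [hlim.eventually_le_const hgap, eventually_gt_atTop 0] with n hn hn0
  calc _ = (Real.exp (-2 * (⌊C * (n : ℝ)⌋₊ / n)) +
      ⌊C * (n : ℝ)⌋₊ / n * (1 / n + 3 * δ)) * n := by field_simp
    _ ≤ _ := by gcongr

lemma tendsto_exp_floor_mul_sub {C K l s : ℝ} (hC : 0 ≤ C) (hs : C * (l * K) ^ 2 < l * s) :
    Tendsto (fun n : ℕ => Real.exp (⌊C * (n : ℝ)⌋₊ * (l * K) ^ 2 - l * (s * n))) atTop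
      (nhds 0) := by
  have hlim : Tendsto (fun n : ℕ => ((⌊C * (n : ℝ)⌋₊ / n : ℝ) * (l * K) ^ 2 - l * s) * n)
      atTop atBot :=
    (((tendsto_floor_mul_div hC).mul_const _).sub_const _).neg_mul_atTop (sub_neg.2 hs)
      tendsto_natCast_atTop_atTop
  refine (Real.tendsto_exp_atBot.comp hlim).congr' ?_
  filter_upwards [eventually_gt_atTop 0] with n hn
  simp only [Function.comp_apply]
  congr 1
  field_simp

lemma exists_mul_le_one_and_mul_sq_lt {C K s : ℝ} (hC : 0 ≤ C) (hK : 0 < K) (hs : 0 < s) :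
    ∃ l, 0 ≤ l ∧ l * K ≤ 1 ∧ C * (l * K) ^ 2 < l * s := by
  refine ⟨s / (s * K + C * K ^ 2), by positivity, ?_, ?_⟩
  · rw [div_mul_eq_mul_div, div_le_one (by positivity)]
    nlinarith [mul_nonneg hC (sq_nonneg K)]
  · have : 0 < s * K + C * K ^ 2 := by positivity
    field_simp
    nlinarith [mul_pos hs hK]

theorem cheap_strategy_dichotomy_general {C δ : ℝ} (hC : 0 ≤ C) (hδ : 0 ≤ δ)
    (st : (n : ℕ) → Strategy n) {η : ℝ} (hη : 0 < η) :
    Tendsto (fun n : ℕ => Pr (fun σ : Ord n =>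
      (∃ i ≤ ⌊C * (n : ℝ)⌋₊, δ * n < #(missed (st n) σ i)) ∨
      (3 / 4 - 3 * δ * C - δ - Real.exp (-2 * C) - η) * n ≤ #(buy (st n) σ ⌊C * (n : ℝ)⌋₊)))
      atTop (nhds 1) := by
  obtain ⟨l, hl, hlK, hls⟩ :=
    exists_mul_le_one_and_mul_sq_lt hC (by positivity : 0 < 5 + 3 * δ) (half_pos hη)
  have htail : Tendsto (fun n : ℕ =>
      1 - Real.exp (⌊C * (n : ℝ)⌋₊ * (l * (5 + 3 * δ)) ^ 2 - l * (η / 2 * n))) atTop (nhds 1) := by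
    simpa using (tendsto_exp_floor_mul_sub hC hls).const_sub 1
  refine tendsto_of_tendsto_of_tendsto_of_le_of_le' htail tendsto_const_nhds ?_
    (Eventually.of_forall fun n => Pr_le_one _)
  filter_upwards [eventually_gt_atTop 0, eventually_three_mul_floor_le_numEdges hC,
    eventually_exp_mul_add_floor_mul_le (δ := δ) hC (half_pos hη)] with n hn hm hloss
  refine (one_sub_exp_le_Pr_missed_or_le_card_buy hn (st n) hδ hm hl hlK (η / 2 * n)).trans
    (Pr_mono fun σ => Or.imp_right fun hbuy => ?_)
  linarith

end Dichotomy

/-- Let `C, δ > 0` and suppose Builder follows any deterministic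
online strategy. Then, for every `η > 0`, with high probability either `|Y_i| > δn` for
some `i ≤ ⌊Cn⌋`, or Builder has purchased at least `(3/4 − 6δC − δ − 2e^{−C} − η)·n`
edges among `e_1, …, e_{⌊Cn⌋}`. Here
`Y_i = {v : deg_{B_i}(v) = 0 and deg_{G_{n,i}}(v) ≥ 1}`. -/
theorem cheap_strategy_dichotomy (C δ : ℝ) (hC : 0 < C) (hδ : 0 < δ)
    (st : (n : ℕ) → Strategy n) (η : ℝ) (hη : 0 < η) :
    Filter.Tendsto
      (fun n : ℕ => Pr (fun σ : Ord n =>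
        (∃ i : ℕ, i ≤ ⌊C * (n : ℝ)⌋₊ ∧
          δ * n < ((((Finset.univ : Finset (Fin n)).filter
            (fun v => deg (buy (st n) σ i) v = 0 ∧ 1 ≤ deg (procEdges σ i) v)).card : ℝ))) ∨
        (3 / 4 - 6 * δ * C - δ - 2 * Real.exp (-C) - η) * n ≤
          ((buy (st n) σ ⌊C * (n : ℝ)⌋₊).card : ℝ)))
      Filter.atTop (nhds 1) := by
  have hexp : Real.exp (-2 * C) ≤ 2 * Real.exp (-C) := by
    have := Real.exp_le_exp.2 (by linarith : -2 * C ≤ -C)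
    linarith [Real.exp_pos (-C)]
  refine tendsto_Pr_one_mono (fun n σ => Or.imp_right fun hbuy => le_trans ?_ hbuy)
    (cheap_strategy_dichotomy_general hC.le hδ.le st hη)
  gcongr ?_ * _
  linarith [mul_pos hδ hC]

end RGP
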